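/- Let f ∈ K[X] be a polynomial of degree d ≥ 2 with good reduction and let q ∈ 𝒪. Then there exists a constant C = C(f,q) > 0 such that for all n ≥ 1, if f⁽ⁿ⁾(q) ≠ q then |f⁽ⁿ⁾(q) − q| > C·|n|_p, where |n|_p is the p-adic absolute value of the integer n. -/

import Mathlib

open Polynomial

/-!
Write `a = f(q) - q` and `b = f'(q)`. Taylor expansion gives `f⁽ⁿ⁾(q) - q = a (1 + b + ⋯ + bⁿ⁻¹)`
modulo `a²`. Suppose that `a` and `b - 1` have norm smaller than every prime number of nonzero norm.
Then for a prime `ℓ` the geometric sum has norm `‖ℓ‖`, so the `ℓ`-th iterate moves `q` by `‖ℓ‖ ‖a‖`,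
and it satisfies the same hypothesis; induction on the prime factors of `n` gives `‖f⁽ⁿ⁾(q) - q‖ ≥
‖n‖ ‖a‖`. If the hypothesis holds for some iterate `f⁽ᵐ⁾` this suffices, because `f⁽ⁿ⁾(q) - q`
divides `f⁽ᵐⁿ⁾(q) - q`. Otherwise the nonzero `‖f⁽ⁿ⁾(q) - q‖` are bounded below: either `q` is
periodic, or its orbit never comes close to `q`, or some `f⁽ᵐ⁾(q)` is close to `q` but no power of
the multiplier `b` of `f⁽ᵐ⁾` is close to `1`; then `1 + b + ⋯ + bⁿ⁻¹`, a divisor of `bⁿ - 1`, is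
bounded below.
-/

section CommRing

variable {R : Type*} [CommRing R]

theorem iterate_comp_X_comp (f : R[X]) (n : ℕ) : (f.comp^[n] X).comp = f.comp^[n] := by
  induction n with
  | zero => ext1 g; simp
  | succ n ih =>
    ext1 g
    rw [Function.iterate_succ_apply', Function.iterate_succ_apply', comp_assoc, ih]

theorem iterate_comp_X_mul (f : R[X]) (m n : ℕ) :
    (f.comp^[m] X).comp^[n] X = f.comp^[m * n] X := by
  rw [iterate_comp_X_comp, Function.iterate_mul]

theorem eval_iterate_comp_X (f : R[X]) (n : ℕ) :
    (fun x => (f.comp^[n] X).eval x) = (fun x => f.eval x)^[n] := by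
  ext x
  simp

theorem eval_sub_dvd_iterate_sub (f : R[X]) (x : R) (n : ℕ) :
    f.eval x - x ∣ (fun y => f.eval y)^[n] x - x := by
  induction n with
  | zero => simp
  | succ n ih =>
    rw [Function.iterate_succ_apply']
    exact (dvd_add_self_right.2 (ih.trans (sub_dvd_eval_sub _ _ f))).trans <|
      (sub_add_sub_cancel _ _ x).dvd

theorem exists_iterate_sub_eq_mul_geom_sum (f : R[X]) (x : R) (n : ℕ) :
    ∃ c, (fun y => f.eval y)^[n] x - x = (f.eval x - x) *
      (∑ i ∈ Finset.range n, f.derivative.eval x ^ i + (f.eval x - x) * c) := by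
  induction n with
  | zero => exact ⟨0, by simp⟩
  | succ n ih =>
    obtain ⟨c, hc⟩ := ih
    obtain ⟨u, hu⟩ := eval_sub_dvd_iterate_sub f x n
    obtain ⟨v, hv⟩ := f.binomExpansion x ((fun y => f.eval y)^[n] x - x)
    rw [add_sub_cancel] at hv
    refine ⟨f.derivative.eval x * c + v * u ^ 2, ?_⟩
    rw [Function.iterate_succ_apply', hv, geom_sum_succ]
    linear_combination f.derivative.eval x * hc +
      v * ((fun y => f.eval y)^[n] x - x + (f.eval x - x) * u) * hu

theorem eval_sub_dvd_derivative_iterate_sub_pow (f : R[X]) (x : R) (n : ℕ) :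
    f.eval x - x ∣ (f.comp^[n] X).derivative.eval x - f.derivative.eval x ^ n := by
  induction n with
  | zero => simp
  | succ n ih =>
    rw [Function.iterate_succ_apply', derivative_comp, eval_mul, eval_comp, pow_succ,
      iterate_comp_eval, eval_X]
    exact dvd_mul_sub_mul ih
      ((eval_sub_dvd_iterate_sub f x n).trans (sub_dvd_eval_sub _ _ _))

theorem sub_one_dvd_geom_sum_sub_natCast (x : R) (n : ℕ) :
    x - 1 ∣ ∑ i ∈ Finset.range n, x ^ i - (n : R) := by
  simpa [eval_finsetSum] using
    sub_dvd_eval_sub x 1 (∑ i ∈ Finset.range n, (X : R[X]) ^ i)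

end CommRing

theorem exists_pos_le_dist_iterate_of_mem_periodicPts {α : Type*} [MetricSpace α] {F : α → α}
    {x : α} (hx : x ∈ Function.periodicPts F) :
    ∃ C > 0, ∀ n, F^[n] x ≠ x → C ≤ dist (F^[n] x) x := by
  obtain ⟨m, hm, hmx⟩ := hx
  have horbit : (Set.range fun n => F^[n] x).Finite :=
    ((Set.finite_lt_nat m).image fun n => F^[n] x).subset <| Set.range_subset_iff.2 fun n =>
      ⟨n % m, Nat.mod_lt n hm, hmx.iterate_mod_apply n⟩
  have hopen : IsOpen ((Set.range fun n => F^[n] x) \ {x})ᶜ :=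
    horbit.sdiff.isClosed.isOpen_compl
  obtain ⟨C, hC, hball⟩ := Metric.isOpen_iff.1 hopen x (by simp)
  refine ⟨C, hC, fun n hn => ?_⟩
  by_contra! hlt
  exact hball hlt ⟨⟨n, rfl⟩, hn⟩

section PrimeNorm

variable {R : Type*} [SeminormedRing R] [NormOneClass R] [IsUltrametricDist R]

theorem norm_natCast_eq_one_of_coprime {m n : ℕ} (hmn : m.Coprime n) (hm : ‖(m : R)‖ < 1) :
    ‖(n : R)‖ = 1 := by
  refine le_antisymm (IsUltrametricDist.norm_natCast_le_one R n) ?_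
  obtain ⟨u, v, huv⟩ := Nat.isCoprime_iff_coprime.2 hmn
  have hmul (w : ℤ) (k : ℕ) : ‖(w : R) * k‖ ≤ ‖(k : R)‖ :=
    (norm_mul_le _ _).trans <| mul_le_of_le_one_left (norm_nonneg _) <|
      IsUltrametricDist.norm_intCast_le_one R w
  have hone : 1 ≤ max ‖(m : R)‖ ‖(n : R)‖ :=
    calc (1 : ℝ) = ‖(u : R) * m + v * n‖ := by
          rw [← norm_one (α := R)]; exact_mod_cast congrArg (fun z : ℤ => ‖(z : R)‖) huv.symm
      _ ≤ max ‖(u : R) * m‖ ‖(v : R) * n‖ := IsUltrametricDist.norm_add_le_max _ _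
      _ ≤ max ‖(m : R)‖ ‖(n : R)‖ := max_le_max (hmul u m) (hmul v n)
  exact (le_max_iff.1 hone).resolve_left hm.not_ge

variable (R) in
theorem exists_pos_le_norm_prime :
    ∃ ε > 0, ∀ ℓ : ℕ, ℓ.Prime → ‖(ℓ : R)‖ ≠ 0 → ε ≤ ‖(ℓ : R)‖ := by
  by_cases h : ∃ p : ℕ, p.Prime ∧ ‖(p : R)‖ ≠ 0 ∧ ‖(p : R)‖ < 1
  · obtain ⟨p, hp, hp0, hp1⟩ := h
    refine ⟨‖(p : R)‖, (norm_nonneg _).lt_of_ne' hp0, fun ℓ hℓ _ => ?_⟩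
    rcases eq_or_ne p ℓ with rfl | hne
    · exact le_rfl
    · exact hp1.le.trans_eq
        (norm_natCast_eq_one_of_coprime ((Nat.coprime_primes hp hℓ).2 hne) hp1).symm
  · push Not at h
    exact ⟨1, one_pos, h⟩

end PrimeNorm

theorem norm_natCast_eq_padicNorm {R : Type*} [SeminormedRing R] [NormOneClass R] [NormMulClass R]
    [IsUltrametricDist R] {p : ℕ} (hp : p.Prime) (hpR : ‖(p : R)‖ = (p : ℝ)⁻¹) (n : ℕ) :
    ‖(n : R)‖ = (padicNorm p (n : ℚ) : ℝ) := by
  have : Fact p.Prime := ⟨hp⟩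
  induction n using induction_on_primes with
  | zero => simp
  | one => simp
  | prime_mul ℓ n hℓ ih =>
    have hprime : ‖(ℓ : R)‖ = (padicNorm p (ℓ : ℚ) : ℝ) := by
      have : Fact ℓ.Prime := ⟨hℓ⟩
      rcases eq_or_ne p ℓ with rfl | hne
      · rw [hpR, padicNorm.padicNorm_p_of_prime, Rat.cast_inv, Rat.cast_natCast]
      · have hlt : ‖(p : R)‖ < 1 := hpR ▸ inv_lt_one_of_one_lt₀ (mod_cast hp.one_lt)
        rw [norm_natCast_eq_one_of_coprime ((Nat.coprime_primes hp hℓ).2 hne) hlt,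
          padicNorm.padicNorm_of_prime_of_ne hne, Rat.cast_one]
    push_cast
    rw [norm_mul, padicNorm.mul, hprime, ih, Rat.cast_mul]

/-- `f` agrees with the identity to first order at `x` up to `ε`: it moves `x` by less than `ε` and
its multiplier `f'(x)` is within `ε` of `1`. Iterates with this property are those whose further
iterates can be estimated by a geometric sum. -/
structure IsNearIdAt {A : Type*} [SeminormedCommRing A] (f : A[X]) (x : A) (ε : ℝ) : Prop where
  norm_eval_sub_lt : ‖f.eval x - x‖ < ε
  norm_derivative_sub_one_lt : ‖f.derivative.eval x - 1‖ < ε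

section Integral

variable {A : Type*} [SeminormedCommRing A]

theorem norm_le_norm_of_dvd (hA : ∀ x : A, ‖x‖ ≤ 1) {x y : A} (h : x ∣ y) : ‖y‖ ≤ ‖x‖ := by
  obtain ⟨z, rfl⟩ := h
  exact (norm_mul_le x z).trans (mul_le_of_le_one_right (norm_nonneg x) (hA z))

theorem norm_iterate_mul_sub_le (hA : ∀ x : A, ‖x‖ ≤ 1) (f : A[X]) (x : A) (m n : ℕ) :
    ‖(fun y => f.eval y)^[m * n] x - x‖ ≤ ‖(fun y => f.eval y)^[m] x - x‖ := by
  have h := eval_sub_dvd_iterate_sub (f.comp^[m] X) x n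
  rw [eval_iterate_comp_X, ← Function.iterate_mul, iterate_comp_eval, eval_X] at h
  exact norm_le_norm_of_dvd hA h

variable [IsUltrametricDist A]

theorem norm_eq_norm_of_dvd_sub (hA : ∀ x : A, ‖x‖ ≤ 1) {x y z : A} (h : x ∣ y - z)
    (hlt : ‖x‖ < ‖z‖) : ‖y‖ = ‖z‖ := by
  have hyz : ‖y - z‖ < ‖z‖ := (norm_le_norm_of_dvd hA h).trans_lt hlt
  rw [← sub_add_cancel y z, IsUltrametricDist.norm_add_eq_max_of_norm_ne_norm hyz.ne,
    max_eq_right hyz.le]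

theorem norm_geom_sum_eq_norm_natCast (hA : ∀ x : A, ‖x‖ ≤ 1) {x : A} {n : ℕ}
    (h : ‖x - 1‖ < ‖(n : A)‖) : ‖∑ i ∈ Finset.range n, x ^ i‖ = ‖(n : A)‖ :=
  norm_eq_norm_of_dvd_sub hA (sub_one_dvd_geom_sum_sub_natCast x n) h

theorem norm_iterate_sub_eq_mul_norm_geom_sum [NormMulClass A] (hA : ∀ x : A, ‖x‖ ≤ 1) (f : A[X])
    (x : A) {n : ℕ} (h : ‖f.eval x - x‖ < ‖∑ i ∈ Finset.range n, f.derivative.eval x ^ i‖) :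
    ‖(fun y => f.eval y)^[n] x - x‖ =
      ‖f.eval x - x‖ * ‖∑ i ∈ Finset.range n, f.derivative.eval x ^ i‖ := by
  obtain ⟨c, hc⟩ := exists_iterate_sub_eq_mul_geom_sum f x n
  rw [hc, norm_mul, norm_eq_norm_of_dvd_sub hA ⟨c, add_sub_cancel_left _ _⟩ h]

theorem isNearIdAt_iterate_comp (hA : ∀ x : A, ‖x‖ ≤ 1) {f : A[X]} {x : A} {ε : ℝ} {n : ℕ}
    (hx : ‖f.eval x - x‖ < ε) (hn : ‖f.derivative.eval x ^ n - 1‖ < ε) :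
    IsNearIdAt (f.comp^[n] X) x ε where
  norm_eval_sub_lt := by
    rw [iterate_comp_eval, eval_X]
    exact (norm_le_norm_of_dvd hA (eval_sub_dvd_iterate_sub f x n)).trans_lt hx
  norm_derivative_sub_one_lt := by
    have h := norm_le_norm_of_dvd hA (eval_sub_dvd_derivative_iterate_sub_pow f x n)
    rw [← sub_add_sub_cancel _ (f.derivative.eval x ^ n) 1]
    exact (IsUltrametricDist.norm_add_le_max _ _).trans_lt (max_lt (h.trans_lt hx) hn)

theorem IsNearIdAt.iterate_comp (hA : ∀ x : A, ‖x‖ ≤ 1) {f : A[X]} {x : A} {ε : ℝ}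
    (h : IsNearIdAt f x ε) (n : ℕ) : IsNearIdAt (f.comp^[n] X) x ε :=
  isNearIdAt_iterate_comp hA h.norm_eval_sub_lt <|
    (norm_le_norm_of_dvd hA (sub_one_dvd_pow_sub_one _ n)).trans_lt h.norm_derivative_sub_one_lt

theorem IsNearIdAt.norm_natCast_mul_le [NormMulClass A] (hA : ∀ x : A, ‖x‖ ≤ 1)
    {ε : ℝ} (hε : ∀ ℓ : ℕ, ℓ.Prime → ‖(ℓ : A)‖ ≠ 0 → ε ≤ ‖(ℓ : A)‖) {f : A[X]} {x : A}
    (h : IsNearIdAt f x ε) (n : ℕ) :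
    ‖(n : A)‖ * ‖f.eval x - x‖ ≤ ‖(fun y => f.eval y)^[n] x - x‖ := by
  induction n using induction_on_primes generalizing f with
  | zero => simp
  | one => simpa using mul_le_of_le_one_left (norm_nonneg (f.eval x - x)) (hA 1)
  | prime_mul ℓ n hℓ ih =>
    rcases eq_or_ne ‖(ℓ : A)‖ 0 with hℓ0 | hℓ0
    · simp [hℓ0]
    have hεℓ := hε ℓ hℓ hℓ0
    have hsum : ‖∑ i ∈ Finset.range ℓ, f.derivative.eval x ^ i‖ = ‖(ℓ : A)‖ :=
      norm_geom_sum_eq_norm_natCast hA (h.norm_derivative_sub_one_lt.trans_le hεℓ)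
    have hiter : ‖(fun y => f.eval y)^[ℓ] x - x‖ = ‖f.eval x - x‖ * ‖(ℓ : A)‖ := by
      rw [norm_iterate_sub_eq_mul_norm_geom_sum hA f x, hsum]
      exact hsum ▸ h.norm_eval_sub_lt.trans_le hεℓ
    have hind := ih (h.iterate_comp hA ℓ)
    rw [eval_iterate_comp_X, iterate_comp_eval, eval_X, ← Function.iterate_mul, hiter] at hind
    calc ‖((ℓ * n : ℕ) : A)‖ * ‖f.eval x - x‖
        = ‖(n : A)‖ * (‖f.eval x - x‖ * ‖(ℓ : A)‖) := by push_cast; rw [norm_mul]; ring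
      _ ≤ ‖(fun y => f.eval y)^[ℓ * n] x - x‖ := hind

end Integral

section NormMulClass

variable {A : Type*} [NormedCommRing A] [NormMulClass A] [IsUltrametricDist A]

theorem exists_pos_le_norm_iterate_sub_of_not_isNearIdAt (hA : ∀ x : A, ‖x‖ ≤ 1) {f : A[X]}
    {x : A} (hx : x ∉ Function.periodicPts fun y => f.eval y) {ε : ℝ} (hε : 0 < ε)
    (hf : ∀ n > 0, ¬ IsNearIdAt (f.comp^[n] X) x ε) :
    ∃ C > 0, ∀ n > 0, C ≤ ‖(fun y => f.eval y)^[n] x - x‖ := by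
  by_cases! hclose : ∀ m > 0, ε ≤ ‖(fun y => f.eval y)^[m] x - x‖
  · exact ⟨ε, hε, hclose⟩
  obtain ⟨m, hm, hmε⟩ := hclose
  set g := f.comp^[m] X with hg
  have hgx : g.eval x = (fun y => f.eval y)^[m] x := by rw [hg, iterate_comp_eval, eval_X]
  rw [← hgx] at hmε
  have hpos : 0 < ‖g.eval x - x‖ :=
    norm_pos_iff.2 <| sub_ne_zero.2 fun h => hx ⟨m, hm, hgx.symm.trans h⟩
  refine ⟨‖g.eval x - x‖ * ε, mul_pos hpos hε, fun n hn => ?_⟩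
  have hpow : ε ≤ ‖g.derivative.eval x ^ n - 1‖ := by
    by_contra! hlt
    exact hf (m * n) (Nat.mul_pos hm hn)
      (iterate_comp_X_mul f m n ▸ isNearIdAt_iterate_comp hA hmε hlt)
  have hsum : ε ≤ ‖∑ i ∈ Finset.range n, g.derivative.eval x ^ i‖ :=
    hpow.trans <| norm_le_norm_of_dvd hA ⟨_, (geom_sum_mul _ n).symm⟩
  calc ‖g.eval x - x‖ * ε
      ≤ ‖g.eval x - x‖ * ‖∑ i ∈ Finset.range n, g.derivative.eval x ^ i‖ := by gcongr
    _ = ‖(fun y => g.eval y)^[n] x - x‖ :=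
        (norm_iterate_sub_eq_mul_norm_geom_sum hA g x (hmε.trans_le hsum)).symm
    _ = ‖(fun y => f.eval y)^[n * m] x - x‖ := by
        rw [hg, eval_iterate_comp_X, ← Function.iterate_mul, mul_comm]
    _ ≤ ‖(fun y => f.eval y)^[n] x - x‖ := norm_iterate_mul_sub_le hA f x n m

theorem exists_pos_mul_norm_natCast_le_norm_iterate_sub [NormOneClass A]
    (hA : ∀ x : A, ‖x‖ ≤ 1) (f : A[X]) (x : A) :
    ∃ C > 0, ∀ n : ℕ, (fun y => f.eval y)^[n] x ≠ x →
      C * ‖(n : A)‖ ≤ ‖(fun y => f.eval y)^[n] x - x‖ := by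
  by_cases hper : x ∈ Function.periodicPts fun y => f.eval y
  · obtain ⟨C, hC, h⟩ := exists_pos_le_dist_iterate_of_mem_periodicPts hper
    refine ⟨C, hC, fun n hn => (mul_le_of_le_one_right hC.le (hA n)).trans ?_⟩
    exact dist_eq_norm ((fun y => f.eval y)^[n] x) x ▸ h n hn
  obtain ⟨ε, hε, hprime⟩ := exists_pos_le_norm_prime A
  by_cases! hnear : ∃ m > 0, IsNearIdAt (f.comp^[m] X) x ε
  · obtain ⟨m, hm, hm_near⟩ := hnear
    refine ⟨‖(fun y => f.eval y)^[m] x - x‖,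
      norm_pos_iff.2 <| sub_ne_zero.2 fun h => hper ⟨m, hm, h⟩, fun n _ => ?_⟩
    have h := hm_near.norm_natCast_mul_le hA hprime n
    rw [eval_iterate_comp_X, ← Function.iterate_mul, iterate_comp_eval, eval_X, mul_comm,
      mul_comm m] at h
    exact h.trans (norm_iterate_mul_sub_le hA f x n m)
  · obtain ⟨C, hC, h⟩ := exists_pos_le_norm_iterate_sub_of_not_isNearIdAt hA hper hε hnear
    refine ⟨C, hC, fun n hn => (mul_le_of_le_one_right hC.le (hA n)).trans (h n ?_)⟩
    exact Nat.pos_of_ne_zero fun h0 => hn (by rw [h0, Function.iterate_zero_apply])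

end NormMulClass

/-- The ring of integers `{x | ‖x‖ ≤ 1}` of an ultrametric ring, as a subring, so that polynomials
with integral coefficients can be regarded as polynomials over it. -/
def unitBallSubring (R : Type*) [SeminormedRing R] [NormOneClass R] [IsUltrametricDist R] :
    Subring R where
  __ := Submonoid.unitClosedBall R
  zero_mem' := by simp
  add_mem' hx hy := by
    rw [Submonoid.mem_carrier, Submonoid.mem_unitClosedBall] at hx hy ⊢
    exact (IsUltrametricDist.norm_add_le_max _ _).trans (max_le hx hy)
  neg_mem' := by simp

theorem mem_unitBallSubring {R : Type*} [SeminormedRing R] [NormOneClass R] [IsUltrametricDist R]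
    {x : R} : x ∈ unitBallSubring R ↔ ‖x‖ ≤ 1 :=
  Submonoid.mem_unitClosedBall R

theorem coe_iterate_eval_toSubring {R : Type*} [CommRing R] (f : R[X]) (T : Subring R)
    (hf : (f.coeffs : Set R) ⊆ T) (x : T) (n : ℕ) :
    ((fun y => (f.toSubring T hf).eval y)^[n] x : R) = (fun y => f.eval y)^[n] (x : R) := by
  have hsemi : Function.Semiconj T.subtype (fun y => (f.toSubring T hf).eval y)
      (fun y => f.eval y) := fun y => by
    have h := eval_map_apply (f := T.subtype) (p := f.toSubring T hf) y
    rw [f.map_toSubring T hf] at h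
    exact h.symm
  exact hsemi.iterate_right n x

theorem stmt6_general {R : Type*} [NormedCommRing R] [NormOneClass R] [NormMulClass R]
    [IsUltrametricDist R] (f : R[X]) (hcoeff : ∀ i, ‖f.coeff i‖ ≤ 1) (q : R) (hq : ‖q‖ ≤ 1) :
    ∃ C : ℝ, 0 < C ∧ ∀ n : ℕ, (fun x => f.eval x)^[n] q ≠ q →
      C * ‖(n : R)‖ < ‖(fun x => f.eval x)^[n] q - q‖ := by
  have hf : (f.coeffs : Set R) ⊆ unitBallSubring R := fun a ha => by
    obtain ⟨i, -, rfl⟩ := mem_coeffs_iff.1 ha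
    exact mem_unitBallSubring.2 (hcoeff i)
  let q₀ : unitBallSubring R := ⟨q, mem_unitBallSubring.2 hq⟩
  have hiter := coe_iterate_eval_toSubring f (unitBallSubring R) hf q₀
  obtain ⟨C, hC, h⟩ := exists_pos_mul_norm_natCast_le_norm_iterate_sub
    (fun x : unitBallSubring R => mem_unitBallSubring.1 x.2) (f.toSubring _ hf) q₀
  refine ⟨C / 2, half_pos hC, fun n hn => ?_⟩
  have hpos : 0 < ‖(fun x => f.eval x)^[n] q - q‖ := norm_pos_iff.2 (sub_ne_zero.2 hn)
  have hle : C * ‖(n : R)‖ ≤ ‖(fun x => f.eval x)^[n] q - q‖ := by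
    rw [← hiter n]
    exact h n fun hfix => hn <| (hiter n).symm.trans (congrArg Subtype.val hfix)
  linarith

/-- Diophantine estimate: if `f` has good reduction and `q` is integral, then
there is `C > 0` with `‖f⁽ⁿ⁾(q) - q‖ > C·|n|_p` for all `n ≥ 1`, provided the left-hand
side is nonzero. -/
theorem stmt6 {K : Type*} [NormedField K] [IsUltrametricDist K] [CompleteSpace K]
    [IsAlgClosed K] [CharZero K]
    (p : ℕ) (hp : p.Prime) (hpK : ‖(p : K)‖ = (p : ℝ)⁻¹)
    (f : K[X]) (d : ℕ) (hd : 2 ≤ d) (hdeg : f.natDegree = d)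
    (hcoeff : ∀ i, ‖f.coeff i‖ ≤ 1) (hlead : ‖f.leadingCoeff‖ = 1)
    (q : K) (hq : ‖q‖ ≤ 1) :
    ∃ C : ℝ, 0 < C ∧ ∀ n : ℕ, 1 ≤ n → (fun x => f.eval x)^[n] q ≠ q →
      C * (padicNorm p (n : ℚ) : ℝ) < ‖(fun x => f.eval x)^[n] q - q‖ := by
  obtain ⟨C, hC, h⟩ := stmt6_general f hcoeff q hq
  exact ⟨C, hC, fun n _ hn => norm_natCast_eq_padicNorm hp hpK n ▸ h n hn⟩
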